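/- Let μ be a mixed strategy for MSR, let ε > 0 and y_0 ∈ (0,B], and set δ = ε·r_1·y_0² / (4·(r_n·y_0 + b_1 + ε·r_1·y_0)). Then 0 < δ < y_0/4, and for every y ∈ (y_0−δ, y_0) one has C(μ,y)/(r_1·y) − C(μ,y_0)/(r_1·y_0) ≤ ε; consequently λ_μ(y) ≥ λ_μ(y_0) − ε for every y ∈ (y_0−δ, y_0). -/

import Mathlib

open MeasureTheory Set

/-- Cost of the pure action `(j, x)` against nature's stopping time `y`. -/
noncomputable def msrCost (r b x y : ℝ) : ℝ := if y < x then r * y else r * x + b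

/-- A mixed strategy of the consumer: a tuple of finite Borel measures on `[0, B]`
(measures on `ℝ` concentrated on `[0, B]`) of total mass `1`. -/
def IsMixed (n : ℕ) (B : ℝ) (μ : ℕ → Measure ℝ) : Prop :=
  (∀ j, IsFiniteMeasure (μ j)) ∧
  (∀ j, μ j (Set.Icc 0 B)ᶜ = 0) ∧
  (∑ j ∈ Finset.range n, (μ j (Set.Icc 0 B)).toReal) = 1

/-- Expected cost of the mixed strategy `μ` against nature's stopping time `y`. -/
noncomputable def expCost (n : ℕ) (r b : ℕ → ℝ) (μ : ℕ → Measure ℝ) (y : ℝ) : ℝ :=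
  ∑ j ∈ Finset.range n, ∫ x, msrCost (r j) (b j) x y ∂(μ j)

/-- Competitive ratio of the mixed strategy `μ`: `sup_{y ∈ (0, B]} C(μ, y) / (r 0 · y)`. -/
noncomputable def ratio (n : ℕ) (r b : ℕ → ℝ) (B : ℝ) (μ : ℕ → Measure ℝ) : ℝ :=
  ⨆ y : Set.Ioc (0 : ℝ) B, expCost n r b μ (y : ℝ) / (r 0 * (y : ℝ))

/-- A mixed strategy is optimal if its competitive ratio is minimal among all
mixed strategies. -/
def IsOptimal (n : ℕ) (r b : ℕ → ℝ) (B : ℝ) (μ : ℕ → Measure ℝ) : Prop :=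
  IsMixed n B μ ∧
  ∀ ν : ℕ → Measure ℝ, IsMixed n B ν → ratio n r b B μ ≤ ratio n r b B ν

/-- `λ_μ(y)`: the gap between the worst-case ratio of `μ` and its ratio at `y`. -/
noncomputable def lamGap (n : ℕ) (r b : ℕ → ℝ) (B : ℝ) (μ : ℕ → Measure ℝ) (y : ℝ) : ℝ :=
  (⨆ t : Set.Ioc (0 : ℝ) B, expCost n r b μ (t : ℝ) / (r 0 * (t : ℝ)))
    - expCost n r b μ y / (r 0 * y)

/-!
The expected cost `C` is nondecreasing in the stopping time and satisfies `C(y₀) ≤ K := R y₀ + D`,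
where `R` and `D` bound the renting rates and the buying prices. So for `y < y₀` only the
normalization can raise the ratio: with `ρ = r 0`,
`C(y) / (ρ y) - C(y₀) / (ρ y₀) ≤ C(y₀) (y₀ - y) / (ρ y y₀) ≤ K (y₀ - y) / (ρ y y₀)`.
The right-hand side is at most `ε` exactly when `(y₀ - y) (K + ε ρ y₀) ≤ ε ρ y₀ ^ 2`, that is, when
`y₀ - y ≤ 4 δ`; the factor `4` in the definition of `δ` only serves the bound `δ < y₀ / 4`.
-/

lemma mem_Icc_of_le_add_one {α : Type*} [Preorder α] {n : ℕ} {f : ℕ → α}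
    (hf : ∀ j, j + 1 < n → f j ≤ f (j + 1)) {j : ℕ} (hj : j < n) :
    f j ∈ Icc (f 0) (f (n - 1)) := by
  have hmono : MonotoneOn f (Iio n) :=
    monotoneOn_of_le_add_one ordConnected_Iio fun j _ _ hj => hf j hj
  have hn : 0 < n := by lia
  exact ⟨hmono hn hj j.zero_le, hmono hj (Nat.sub_lt hn one_pos) (by lia)⟩

lemma mem_Icc_of_add_one_le {α : Type*} [Preorder α] {n : ℕ} {f : ℕ → α}
    (hf : ∀ j, j + 1 < n → f (j + 1) ≤ f j) {j : ℕ} (hj : j < n) :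
    f j ∈ Icc (f (n - 1)) (f 0) :=
  (mem_Icc_of_le_add_one (α := αᵒᵈ) hf hj).symm

lemma div_mul_sub_div_mul_le_of_sub_mul_le {a a₀ K ρ ε y y₀ : ℝ} (hρ : 0 < ρ) (hy : 0 < y)
    (hyy₀ : y ≤ y₀) (ha : a ≤ a₀) (haK : a₀ ≤ K)
    (hK : (y₀ - y) * (K + ε * ρ * y₀) ≤ ε * ρ * y₀ ^ 2) :
    a / (ρ * y) - a₀ / (ρ * y₀) ≤ ε := by
  have hy₀ : 0 < y₀ := hy.trans_le hyy₀
  calc a / (ρ * y) - a₀ / (ρ * y₀)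
      ≤ a₀ / (ρ * y) - a₀ / (ρ * y₀) := by gcongr
    _ = a₀ * (y₀ - y) / (ρ * y * y₀) := by field_simp
    _ ≤ K * (y₀ - y) / (ρ * y * y₀) := by
      have := sub_nonneg.2 hyy₀
      gcongr
    _ ≤ ε := by
      rw [div_le_iff₀ (by positivity)]
      linarith

section PureCost

variable {r b x y : ℝ}

lemma measurable_msrCost (r b y : ℝ) : Measurable fun x => msrCost r b x y :=
  Measurable.ite measurableSet_Ioi measurable_const (by fun_prop)

lemma msrCost_nonneg (hr : 0 ≤ r) (hb : 0 ≤ b) (hx : 0 ≤ x) (hy : 0 ≤ y) :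
    0 ≤ msrCost r b x y := by
  unfold msrCost
  split_ifs <;> positivity

lemma msrCost_le_mul_add (hr : 0 ≤ r) (hb : 0 ≤ b) (x y : ℝ) : msrCost r b x y ≤ r * y + b := by
  unfold msrCost
  split_ifs with hyx
  · exact le_add_of_nonneg_right hb
  · gcongr
    exact not_lt.1 hyx

lemma monotone_msrCost (hr : 0 ≤ r) (hb : 0 ≤ b) (x : ℝ) : Monotone (msrCost r b x) := by
  intro y z hyz
  by_cases hz : z < x
  · simp only [msrCost, hz, hyz.trans_lt hz, if_true]
    gcongr
  by_cases hy : y < x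
  · simp only [msrCost, hy, hz, if_true, if_false]
    have : r * y ≤ r * x := by gcongr
    linarith
  · simp only [msrCost, hy, hz, if_false, le_refl]

variable {ν : Measure ℝ} [IsFiniteMeasure ν]

lemma integrable_msrCost (hr : 0 ≤ r) (hb : 0 ≤ b) (hy : 0 ≤ y) (hν : ∀ᵐ x ∂ν, 0 ≤ x) :
    Integrable (fun x => msrCost r b x y) ν := by
  refine .of_bound (measurable_msrCost r b y).aestronglyMeasurable (r * y + b) ?_
  filter_upwards [hν] with x hx
  rw [Real.norm_of_nonneg (msrCost_nonneg hr hb hx hy)]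
  exact msrCost_le_mul_add hr hb x y

lemma integral_msrCost_le (hr : 0 ≤ r) (hb : 0 ≤ b) (hy : 0 ≤ y) (hν : ∀ᵐ x ∂ν, 0 ≤ x) :
    ∫ x, msrCost r b x y ∂ν ≤ ν.real univ * (r * y + b) :=
  calc ∫ x, msrCost r b x y ∂ν
      ≤ ∫ _, (r * y + b) ∂ν :=
        integral_mono (integrable_msrCost hr hb hy hν) (integrable_const _)
          fun x => msrCost_le_mul_add hr hb x y
    _ = ν.real univ * (r * y + b) := by rw [integral_const, smul_eq_mul]

end PureCost

namespace IsMixed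

variable {n : ℕ} {r b : ℕ → ℝ} {B R D : ℝ} {μ : ℕ → Measure ℝ}

lemma ae_mem_Icc (hμ : IsMixed n B μ) (j : ℕ) : ∀ᵐ x ∂μ j, x ∈ Icc 0 B :=
  hμ.2.1 j

lemma ae_nonneg (hμ : IsMixed n B μ) (j : ℕ) : ∀ᵐ x ∂μ j, 0 ≤ x :=
  (hμ.ae_mem_Icc j).mono fun _ hx => hx.1

lemma sum_real_univ (hμ : IsMixed n B μ) : ∑ j ∈ Finset.range n, (μ j).real univ = 1 := by
  rw [← hμ.2.2]
  refine Finset.sum_congr rfl fun j _ => ?_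
  exact measureReal_congr (Filter.eventuallyEq_univ.2 (hμ.ae_mem_Icc j)).symm

lemma shops_pos (hμ : IsMixed n B μ) : 0 < n := by
  refine Nat.pos_of_ne_zero fun hn => ?_
  simpa [hn] using hμ.sum_real_univ

lemma monotoneOn_expCost (hμ : IsMixed n B μ) (hr : ∀ j < n, 0 ≤ r j) (hb : ∀ j < n, 0 ≤ b j) :
    MonotoneOn (expCost n r b μ) (Ici 0) := by
  intro y hy z hz hyz
  refine Finset.sum_le_sum fun j hj => ?_
  have := hμ.1 j
  have hrj := hr j (Finset.mem_range.1 hj)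
  have hbj := hb j (Finset.mem_range.1 hj)
  exact integral_mono (integrable_msrCost hrj hbj hy (hμ.ae_nonneg j))
    (integrable_msrCost hrj hbj hz (hμ.ae_nonneg j)) fun x => monotone_msrCost hrj hbj x hyz

lemma expCost_le (hμ : IsMixed n B μ) (hr : ∀ j < n, r j ∈ Icc 0 R) (hb : ∀ j < n, b j ∈ Icc 0 D)
    {y : ℝ} (hy : 0 ≤ y) : expCost n r b μ y ≤ R * y + D := by
  have shop_le : ∀ j ∈ Finset.range n,
      ∫ x, msrCost (r j) (b j) x y ∂μ j ≤ (μ j).real univ * (R * y + D) := by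
    intro j hj
    have := hμ.1 j
    obtain ⟨hr_nonneg, hr_le⟩ := hr j (Finset.mem_range.1 hj)
    obtain ⟨hb_nonneg, hb_le⟩ := hb j (Finset.mem_range.1 hj)
    refine (integral_msrCost_le hr_nonneg hb_nonneg hy (hμ.ae_nonneg j)).trans ?_
    gcongr
  calc expCost n r b μ y
      ≤ ∑ j ∈ Finset.range n, (μ j).real univ * (R * y + D) := Finset.sum_le_sum shop_le
    _ = R * y + D := by rw [← Finset.sum_mul, hμ.sum_real_univ, one_mul]

end IsMixed

lemma lamGap_sub_lamGap (n : ℕ) (r b : ℕ → ℝ) (B : ℝ) (μ : ℕ → Measure ℝ) (y z : ℝ) :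
    lamGap n r b B μ y - lamGap n r b B μ z =
      expCost n r b μ z / (r 0 * z) - expCost n r b μ y / (r 0 * y) :=
  sub_sub_sub_cancel_left _ _ _

theorem msr_ratio_left_lsc_general {n : ℕ} {r b : ℕ → ℝ} {R D B : ℝ} {μ : ℕ → Measure ℝ}
    (hr0 : 0 < r 0) (hr : ∀ j < n, r j ∈ Icc 0 R) (hb : ∀ j < n, b j ∈ Icc 0 D)
    (hμ : IsMixed n B μ) {ε y₀ δ : ℝ} (hε : 0 < ε) (hy₀ : y₀ ∈ Ioc 0 B)
    (hδ : δ = ε * r 0 * y₀ ^ 2 / (4 * (R * y₀ + D + ε * r 0 * y₀))) :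
    0 < δ ∧ δ < y₀ / 4 ∧
    ∀ y ∈ Ioo (y₀ - δ) y₀,
      expCost n r b μ y / (r 0 * y) - expCost n r b μ y₀ / (r 0 * y₀) ≤ ε ∧
      lamGap n r b B μ y₀ - ε ≤ lamGap n r b B μ y := by
  have hy₀_pos : 0 < y₀ := hy₀.1
  have hR : 0 < R := hr0.trans_le (hr 0 hμ.shops_pos).2
  have hD : 0 ≤ D := (hb 0 hμ.shops_pos).1.trans (hb 0 hμ.shops_pos).2
  have hδ_pos : 0 < δ := by rw [hδ]; positivity
  have hδ_mul : 4 * δ * (R * y₀ + D + ε * r 0 * y₀) = ε * r 0 * y₀ ^ 2 := by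
    rw [hδ]
    field_simp
  have hδ_lt : δ < y₀ / 4 := by
    suffices 4 * δ < y₀ by linarith
    refine lt_of_mul_lt_mul_right (a := R * y₀ + D + ε * r 0 * y₀) ?_ (by positivity)
    have : 0 < y₀ * (R * y₀ + D) := by positivity
    linarith
  refine ⟨hδ_pos, hδ_lt, fun y ⟨hy_left, hy_right⟩ => ?_⟩
  have hy_pos : 0 < y := by linarith
  have cost_le : expCost n r b μ y ≤ expCost n r b μ y₀ :=
    hμ.monotoneOn_expCost (fun j hj => (hr j hj).1) (fun j hj => (hb j hj).1)
      hy_pos.le hy₀_pos.le hy_right.le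
  have ratio_sub_le : expCost n r b μ y / (r 0 * y) - expCost n r b μ y₀ / (r 0 * y₀) ≤ ε := by
    refine div_mul_sub_div_mul_le_of_sub_mul_le hr0 hy_pos hy_right.le cost_le
      (hμ.expCost_le hr hb hy₀_pos.le) ?_
    rw [← hδ_mul]
    gcongr
    linarith
  refine ⟨ratio_sub_le, sub_le_comm.1 ?_⟩
  rwa [lamGap_sub_lamGap]

/-- quantitative left lower-semicontinuity of the normalized cost:
with `δ = ε·r₁·y₀² / (4·(rₙ·y₀ + b₁ + ε·r₁·y₀))` one has `0 < δ < y₀/4` and the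
ratio at any `y ∈ (y₀ − δ, y₀)` exceeds the ratio at `y₀` by at most `ε`. -/
theorem msr_ratio_left_lsc
    (n : ℕ) (hn : 0 < n) (r b : ℕ → ℝ)
    (hr0 : 0 < r 0)
    (hrmono : ∀ j, j + 1 < n → r j < r (j + 1))
    (hbmono : ∀ j, j + 1 < n → b (j + 1) < b j)
    (hbn : 0 < b (n - 1))
    (B : ℝ) (hB : B = b (n - 1) / r 0)
    (μ : ℕ → Measure ℝ) (hμ : IsMixed n B μ)
    (ε y0 : ℝ) (hε : 0 < ε) (hy0 : y0 ∈ Set.Ioc (0 : ℝ) B)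
    (δ : ℝ) (hδ : δ = ε * r 0 * y0 ^ 2 / (4 * (r (n - 1) * y0 + b 0 + ε * r 0 * y0))) :
    0 < δ ∧ δ < y0 / 4 ∧
    ∀ y ∈ Set.Ioo (y0 - δ) y0,
      expCost n r b μ y / (r 0 * y) - expCost n r b μ y0 / (r 0 * y0) ≤ ε ∧
      lamGap n r b B μ y0 - ε ≤ lamGap n r b B μ y := by
  exact msr_ratio_left_lsc_general hr0
    (fun _ hj => Icc_subset_Icc_left hr0.le (mem_Icc_of_le_add_one (fun j h => (hrmono j h).le) hj))
    (fun _ hj => Icc_subset_Icc_left hbn.le (mem_Icc_of_add_one_le (fun j h => (hbmono j h).le) hj))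
    hμ hε hy0 hδ
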